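/- For every real r > −r₀, the function k̄ is differentiable at r and k̄′(r)/φ̄(r) = −(1/(n−1))·k̄(r)²·(1 − (n/2)·exp(−((n−2)/(n−1))(r + r₀)))/(1 − exp(−((n−2)/(n−1))(r + r₀))). -/

import Mathlib

/-! Since `φ̄ = 1 / k̄`, the quotient `k̄' / φ̄ = k̄' k̄` is `k̄²` times the logarithmic
derivative of `k̄`, in which the constant factor `φ₀⁻¹` drops out, the square root contributes a
factor `1 / 2`, and the product under the root splits into a sum. -/

open Real

noncomputable def kbar (n : ℕ) (r₀ φ₀ : ℝ) (r : ℝ) : ℝ :=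
  φ₀⁻¹ * Real.sqrt
    (((1 - Real.exp (-((((n : ℝ) - 2) / ((n : ℝ) - 1)) * (r + r₀)))) /
      (1 - Real.exp (-((((n : ℝ) - 2) / ((n : ℝ) - 1)) * r₀)))) *
      Real.exp (-((2 / ((n : ℝ) - 1)) * r)))

noncomputable def φbar (n : ℕ) (r₀ φ₀ : ℝ) (r : ℝ) : ℝ :=
  φ₀ * Real.sqrt
    (((1 - Real.exp (-((((n : ℝ) - 2) / ((n : ℝ) - 1)) * r₀))) /
      (1 - Real.exp (-((((n : ℝ) - 2) / ((n : ℝ) - 1)) * (r + r₀))))) *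
      Real.exp ((2 / ((n : ℝ) - 1)) * r))

lemma one_sub_exp_neg_pos {x : ℝ} (hx : 0 < x) : 0 < 1 - exp (-x) :=
  sub_pos.mpr (exp_lt_one_iff.mpr (neg_neg_of_pos hx))

lemma one_sub_exp_neg_ne_zero {x : ℝ} (hx : x ≠ 0) : 1 - exp (-x) ≠ 0 :=
  sub_ne_zero.mpr fun h => hx (neg_eq_zero.mp ((exp_eq_one_iff _).mp h.symm))

section LogDeriv

variable {f : ℝ → ℝ} {x : ℝ}

lemma logDeriv_sqrt_comp (hf : DifferentiableAt ℝ f x) (hx : 0 < f x) :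
    logDeriv (fun y => √(f y)) x = logDeriv f x / 2 := by
  rw [logDeriv_apply, deriv_sqrt hf hx.ne', div_div, mul_assoc, mul_self_sqrt hx.le,
    logDeriv_apply, div_div, mul_comm 2]

lemma logDeriv_exp_comp (hf : DifferentiableAt ℝ f x) :
    logDeriv (fun y => exp (f y)) x = deriv f x := by
  rw [logDeriv_apply, deriv_exp hf, mul_div_cancel_left₀ _ (exp_ne_zero _)]

lemma logDeriv_one_sub_exp_comp (hf : DifferentiableAt ℝ f x) :
    logDeriv (fun y => 1 - exp (f y)) x = -(exp (f x) * deriv f x) / (1 - exp (f x)) := by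
  rw [logDeriv_apply, deriv_const_sub, deriv_exp hf]

end LogDeriv

/-- The function under the square root in `k̄`, with arbitrary decay rates `a` and `b`; the mean
curvature `k̄` has `a = (n - 2) / (n - 1)` and `b = 2 / (n - 1)`. -/
noncomputable def kbarRadicand (a b r₀ r : ℝ) : ℝ :=
  (1 - exp (-(a * (r + r₀)))) / (1 - exp (-(a * r₀))) * exp (-(b * r))

section kbarRadicand

variable {a r₀ r : ℝ}

lemma kbarRadicand_pos (ha : 0 < a) (hr₀ : 0 < r₀) (hr : -r₀ < r) (b : ℝ) :
    0 < kbarRadicand a b r₀ r :=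
  mul_pos
    (div_pos (one_sub_exp_neg_pos (mul_pos ha (neg_lt_iff_pos_add.mp hr)))
      (one_sub_exp_neg_pos (mul_pos ha hr₀)))
    (exp_pos _)

lemma differentiable_kbarRadicand (a b r₀ : ℝ) : Differentiable ℝ (kbarRadicand a b r₀) := by
  unfold kbarRadicand
  fun_prop

lemma logDeriv_kbarRadicand (ha : a ≠ 0) (hr₀ : r₀ ≠ 0) (hr : r + r₀ ≠ 0) (b : ℝ) :
    logDeriv (kbarRadicand a b r₀) r =
      a * exp (-(a * (r + r₀))) / (1 - exp (-(a * (r + r₀)))) - b := by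
  have hA : 1 - exp (-(a * (r + r₀))) ≠ 0 := one_sub_exp_neg_ne_zero (mul_ne_zero ha hr)
  have hB : 1 - exp (-(a * r₀)) ≠ 0 := one_sub_exp_neg_ne_zero (mul_ne_zero ha hr₀)
  have deriv_shift : deriv (fun x => -(a * (x + r₀))) r = -a := by simp
  have deriv_linear : deriv (fun x => -(b * x)) r = -b := by simp
  calc logDeriv (kbarRadicand a b r₀) r
      = logDeriv (fun x => (1 - exp (-(a * (x + r₀)))) / (1 - exp (-(a * r₀)))) r
          + logDeriv (fun x => exp (-(b * x))) r :=
        logDeriv_mul r (div_ne_zero hA hB) (exp_ne_zero _) (by fun_prop) (by fun_prop)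
    _ = logDeriv (fun x => 1 - exp (-(a * (x + r₀)))) r
          + logDeriv (fun x => exp (-(b * x))) r := by
        simp only [div_eq_mul_inv, logDeriv_mul_const _ _ (inv_ne_zero hB)]
    _ = a * exp (-(a * (r + r₀))) / (1 - exp (-(a * (r + r₀)))) - b := by
        rw [logDeriv_one_sub_exp_comp (by fun_prop), logDeriv_exp_comp (by fun_prop),
          deriv_shift, deriv_linear]
        ring

end kbarRadicand

lemma kbar_eq_mul_sqrt_kbarRadicand (n : ℕ) (r₀ φ₀ : ℝ) :
    kbar n r₀ φ₀ = fun r => φ₀⁻¹ * √(kbarRadicand ((n - 2) / (n - 1)) (2 / (n - 1)) r₀ r) :=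
  rfl

-- Valid at every real `r`: the junk values of `√` and `/` are compatible with inversion.
lemma φbar_eq_inv_kbar (n : ℕ) (r₀ φ₀ r : ℝ) : φbar n r₀ φ₀ r = (kbar n r₀ φ₀ r)⁻¹ := by
  rw [φbar, kbar, mul_inv, inv_inv, ← sqrt_inv, mul_inv, inv_div, ← exp_neg, neg_neg]

lemma deriv_kbar_div_φbar (n : ℕ) (r₀ φ₀ r : ℝ) :
    deriv (kbar n r₀ φ₀) r / φbar n r₀ φ₀ r =
      kbar n r₀ φ₀ r ^ 2 * logDeriv (kbar n r₀ φ₀) r := by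
  rw [φbar_eq_inv_kbar, logDeriv_apply]
  field_simp

lemma sub_two_div_sub_one_pos {n : ℕ} (hn : 3 ≤ n) : 0 < ((n : ℝ) - 2) / ((n : ℝ) - 1) := by
  have hn' : (3 : ℝ) ≤ n := by exact_mod_cast hn
  exact div_pos (by linarith) (by linarith)

section kbar

variable {n : ℕ} {r₀ φ₀ r : ℝ}

lemma differentiableAt_kbar (hn : 3 ≤ n) (hr₀ : 0 < r₀) (hr : -r₀ < r) (φ₀ : ℝ) :
    DifferentiableAt ℝ (kbar n r₀ φ₀) r :=
  ((differentiable_kbarRadicand _ _ r₀ r).sqrt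
    (kbarRadicand_pos (sub_two_div_sub_one_pos hn) hr₀ hr _).ne').const_mul φ₀⁻¹

lemma logDeriv_kbar (hn : 3 ≤ n) (hr₀ : 0 < r₀) (hφ₀ : φ₀ ≠ 0) (hr : -r₀ < r) :
    logDeriv (kbar n r₀ φ₀) r =
      -(1 / ((n : ℝ) - 1)) *
        (1 - (n : ℝ) / 2 * exp (-(((n : ℝ) - 2) / ((n : ℝ) - 1) * (r + r₀)))) /
        (1 - exp (-(((n : ℝ) - 2) / ((n : ℝ) - 1) * (r + r₀)))) := by
  have hn' : (n : ℝ) - 1 ≠ 0 := by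
    have : (3 : ℝ) ≤ n := by exact_mod_cast hn
    linarith
  have hr' : 0 < r + r₀ := neg_lt_iff_pos_add.mp hr
  have hA := (one_sub_exp_neg_pos (mul_pos (sub_two_div_sub_one_pos hn) hr')).ne'
  rw [kbar_eq_mul_sqrt_kbarRadicand, logDeriv_const_mul _ _ (inv_ne_zero hφ₀),
    logDeriv_sqrt_comp (differentiable_kbarRadicand _ _ r₀ r)
      (kbarRadicand_pos (sub_two_div_sub_one_pos hn) hr₀ hr _),
    logDeriv_kbarRadicand (sub_two_div_sub_one_pos hn).ne' hr₀.ne' hr'.ne']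
  -- With `a = (n - 2) / (n - 1)` and `b = 2 / (n - 1)`, the numerator `a e - b (1 - e)` is
  -- `(a + b) e - b`, and `a + b = n / (n - 1)`.
  generalize exp (-(((n : ℝ) - 2) / ((n : ℝ) - 1) * (r + r₀))) = e at hA ⊢
  field_simp
  ring

end kbar

theorem kbar_deriv (n : ℕ) (hn : 3 ≤ n) (r₀ φ₀ : ℝ)
    (hr₀ : 0 < r₀) (hφ₀ : 0 < φ₀) :
    ∀ r : ℝ, r > -r₀ →
      DifferentiableAt ℝ (kbar n r₀ φ₀) r ∧
      deriv (kbar n r₀ φ₀) r / φbar n r₀ φ₀ r =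
        -(1 / ((n : ℝ) - 1)) * (kbar n r₀ φ₀ r) ^ 2 *
          (1 - ((n : ℝ) / 2) *
              Real.exp (-((((n : ℝ) - 2) / ((n : ℝ) - 1)) * (r + r₀)))) /
          (1 - Real.exp (-((((n : ℝ) - 2) / ((n : ℝ) - 1)) * (r + r₀)))) := by
  intro r hr
  refine ⟨differentiableAt_kbar hn hr₀ hr φ₀, ?_⟩
  rw [deriv_kbar_div_φbar, logDeriv_kbar hn hr₀ hφ₀.ne' hr]
  ring
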